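/- For every integer p ≥ 2 there exists a function T, analytic on the cut plane Ω_p := ℂ ∖ [R_p, ∞), such that z·T(z)^p − T(z) + 1 = 0 for all z ∈ Ω_p and such that T(z) = Σ_{n≥0} C_n^{(p)} z^n whenever |z| < R_p. -/

import Mathlib

/-!
The function `T` is given by an explicit Cauchy-type integral. Put `h t = (1 + t) ^ p / t`.

* Along any closed `C¹` curve winding once around `0`, expanding `(1 + t) ^ (p n)` by the binomial
  theorem and integrating monomials gives
  `∫ h t ^ n (1 - (p - 1) t) dt / t = 2 π i C_n`, because
  `C_n = choose (p n) n - (p - 1) choose (p n) (n - 1)` (`IsLogLoop.integral_moment`). Summing a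
  geometric series, `T z = (2 π i)⁻¹ ∫ (1 - (p - 1) t) / (1 - z h t) dt / t` equals `∑ C_n z ^ n`
  whenever `|z h|` stays below a constant less than `1` on the curve (`IsLogLoop.hasSum_integral`).

* On the curve `t = exp (i p x) sin x / sin ((p - 1) x)`, `|x| ≤ π / p`, one has
  `1 + t = exp (i x) sin (p x) / sin ((p - 1) x)`, so `h` is real, and concavity of the sine gives
  `0 ≤ h ≤ 1 / R_p` (`kernel_logCurve`). Hence `1 - z h` has no zero on the curve for `z` in the cut
  plane, the integral is holomorphic there, and it is the Fuss–Catalan series for `|z| < R_p`.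

* On the unit circle and for small `z`, the same series is a residue at the only root `t₀` of
  `t = z (1 + t) ^ p` in the disc, and the residue is `1 + t₀` (`integral_circle`). So
  `T = 1 + z T ^ p` near `0`, and on the whole cut plane, which is star-shaped about `0`, by the
  identity theorem.
-/

/-- The Fuss–Catalan numbers of order `p`: `C_n^{(p)} = binom(pn, n) / ((p-1)n + 1)`. -/
noncomputable def fussCatalan (p n : ℕ) : ℂ :=
  ((p * n).choose n : ℂ) / (((p - 1) * n + 1 : ℕ) : ℂ)

/-- `R_p = (p-1)^(p-1) / p^p`. -/
noncomputable def Rp (p : ℕ) : ℝ :=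
  ((p - 1 : ℕ) : ℝ) ^ (p - 1) / (p : ℝ) ^ p

/-- The cut plane `Ω_p = ℂ ∖ [R_p, ∞)`. -/
noncomputable def cutPlane (p : ℕ) : Set ℂ :=
  (Complex.ofReal '' Set.Ici (Rp p))ᶜ

open Complex MeasureTheory intervalIntegral

/-! ### Moments along loops around the origin -/

/-- The Fuss–Catalan number as the combination of binomial coefficients produced by
extracting a constant term from `((1 + t) ^ p / t) ^ (n + 1) * (1 - (p - 1) t)`. -/
lemma fussCatalan_succ (p n : ℕ) (hp : 1 ≤ p) :
    fussCatalan p (n + 1) =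
      ((p * (n + 1)).choose (n + 1) : ℂ) - ((p : ℂ) - 1) * ((p * (n + 1)).choose n : ℂ) := by
  obtain ⟨q, rfl⟩ : ∃ q, p = q + 1 := ⟨p - 1, by omega⟩
  have h := Nat.choose_succ_right_eq ((q + 1) * (n + 1)) n
  have h1 : (q + 1) * (n + 1) - n = q * (n + 1) + 1 := by
    have : (q + 1) * (n + 1) = q * (n + 1) + 1 + n := by ring
    omega
  rw [h1] at h
  have h2 : (((q + 1) * (n + 1)).choose (n + 1) : ℂ) * (n + 1)
      = (((q + 1) * (n + 1)).choose n : ℂ) * (q * (n + 1) + 1) := by exact_mod_cast h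
  have h3 : ((q : ℂ) * (n + 1) + 1) ≠ 0 := by exact_mod_cast Nat.succ_ne_zero (q * (n + 1))
  unfold fussCatalan
  simp only [Nat.add_sub_cancel]
  push_cast
  rw [div_eq_iff h3]
  linear_combination -(q : ℂ) * h2

/-- A closed curve `t = exp (L x)`, `x ∈ [a, b]`, winding once around the origin, given by a
`C¹` branch `L` of its logarithm; `L'` is the derivative of `L`. -/
structure IsLogLoop (a b : ℝ) (L L' : ℝ → ℂ) : Prop where
  hasDerivAt : ∀ x ∈ Set.uIcc a b, HasDerivAt L (L' x) x
  cont : ContinuousOn L' (Set.uIcc a b)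
  period : L b = L a + 2 * Real.pi * I

namespace IsLogLoop

variable {a b : ℝ} {L L' : ℝ → ℂ}

lemma continuousOn (h : IsLogLoop a b L L') : ContinuousOn L (Set.uIcc a b) :=
  fun x hx => (h.hasDerivAt x hx).continuousAt.continuousWithinAt

lemma integral_zpow (h : IsLogLoop a b L L') (j : ℤ) :
    ∫ x in a..b, exp (j * L x) * L' x = if j = 0 then 2 * Real.pi * I else 0 := by
  have hc := h.continuousOn
  have hc' := h.cont
  split_ifs with hj
  · subst hj
    have := integral_eq_sub_of_hasDerivAt h.hasDerivAt hc'.intervalIntegrable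
    simp only [Int.cast_zero, zero_mul, exp_zero, one_mul, this, h.period]
    ring
  · have hj' : (j : ℂ) ≠ 0 := by exact_mod_cast hj
    have hd : ∀ x ∈ Set.uIcc a b,
        HasDerivAt (fun x => exp (j * L x) / j) (exp (j * L x) * L' x) x := by
      intro x hx
      have := (((h.hasDerivAt x hx).const_mul (j : ℂ)).cexp).div_const (j : ℂ)
      rwa [mul_left_comm, mul_div_cancel_left₀ _ hj'] at this
    have hi : ContinuousOn (fun x => exp (j * L x) * L' x) (Set.uIcc a b) := by fun_prop
    rw [integral_eq_sub_of_hasDerivAt hd hi.intervalIntegrable, h.period]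
    have : exp (j * (L a + 2 * Real.pi * I)) = exp (j * L a) := by
      rw [mul_add, exp_add, exp_int_mul_two_pi_mul_I, mul_one]
    rw [this, sub_self]

lemma integral_binomial (h : IsLogLoop a b L L') (N q : ℕ) :
    ∫ x in a..b, (1 + exp (L x)) ^ N * exp (-(q * L x)) * L' x
      = 2 * Real.pi * I * N.choose q := by
  have hc := h.continuousOn
  have hc' := h.cont
  have e : ∀ x, (1 + exp (L x)) ^ N * exp (-(q * L x)) * L' x
      = ∑ k ∈ Finset.range (N + 1),
        (N.choose k : ℂ) * (exp (((k - q : ℤ) : ℂ) * L x) * L' x) := by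
    intro x
    rw [add_comm, add_pow, Finset.sum_mul, Finset.sum_mul]
    refine Finset.sum_congr rfl fun k _ => ?_
    have : exp (((k - q : ℤ) : ℂ) * L x) = exp (L x) ^ k * exp (-(q * L x)) := by
      rw [← exp_nat_mul, ← exp_add]; congr 1; push_cast; ring
    rw [this, one_pow]; ring
  simp_rw [e]
  rw [intervalIntegral.integral_finsetSum]
  · simp_rw [intervalIntegral.integral_const_mul, h.integral_zpow]
    by_cases hq : q ∈ Finset.range (N + 1)
    · rw [Finset.sum_eq_single_of_mem q hq]
      · simp; ring
      · intro k _ hk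
        rw [if_neg (by omega), mul_zero]
    · rw [Finset.sum_eq_zero, Nat.choose_eq_zero_of_lt]
      · simp
      · simpa using hq
      · intro k hk
        rw [if_neg, mul_zero]
        rintro hk'
        apply hq
        have : k = q := by omega
        rwa [← this]
  · intro k _
    apply ContinuousOn.intervalIntegrable
    fun_prop

/-- The Fuss–Catalan numbers are the moments of `(1 + t) ^ p / t` along the loop, against
`(1 - (p - 1) t) dt / t`. -/
lemma integral_moment (h : IsLogLoop a b L L') (p n : ℕ) (hp : 1 ≤ p) :
    ∫ x in a..b, ((1 - ((p : ℂ) - 1) * exp (L x)) * L' x) *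
        ((1 + exp (L x)) ^ p * exp (-L x)) ^ n
      = 2 * Real.pi * I * fussCatalan p n := by
  have hc := h.continuousOn
  have hc' := h.cont
  cases n with
  | zero =>
    have h0 := h.integral_zpow 0
    have h1 := h.integral_zpow 1
    simp only [Int.cast_zero, zero_mul, exp_zero, one_mul, Int.cast_one] at h0 h1
    have e : ∀ x, ((1 - ((p : ℂ) - 1) * exp (L x)) * L' x) *
        ((1 + exp (L x)) ^ p * exp (-L x)) ^ 0
        = L' x - ((p : ℂ) - 1) * (exp (L x) * L' x) := by intro x; ring
    simp_rw [e]
    rw [intervalIntegral.integral_sub, intervalIntegral.integral_const_mul, h0, h1]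
    · simp [fussCatalan]
    · exact hc'.intervalIntegrable
    · apply ContinuousOn.intervalIntegrable
      fun_prop
  | succ n =>
    have e : ∀ x, ((1 - ((p : ℂ) - 1) * exp (L x)) * L' x) *
        ((1 + exp (L x)) ^ p * exp (-L x)) ^ (n + 1)
        = (1 + exp (L x)) ^ (p * (n + 1)) * exp (-((n + 1 : ℕ) * L x)) * L' x
          - ((p : ℂ) - 1) *
            ((1 + exp (L x)) ^ (p * (n + 1)) * exp (-(n * L x)) * L' x) := by
      intro x
      have e1 : exp (-((n + 1 : ℕ) * L x)) = exp (-L x) ^ (n + 1) := by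
        rw [← exp_nat_mul]; congr 1; push_cast; ring
      have e2 : exp (-(n * L x)) = exp (L x) * exp (-L x) ^ (n + 1) := by
        rw [← exp_nat_mul, ← exp_add]; congr 1; push_cast; ring
      rw [e1, e2, mul_pow, ← pow_mul]; ring
    simp_rw [e]
    rw [intervalIntegral.integral_sub, intervalIntegral.integral_const_mul,
      h.integral_binomial, h.integral_binomial, fussCatalan_succ p n hp]
    · ring
    · apply ContinuousOn.intervalIntegrable
      fun_prop
    · apply ContinuousOn.intervalIntegrable
      fun_prop

/-- Summing the geometric series under the integral sign. -/
lemma hasSum_integral (h : IsLogLoop a b L L') (p : ℕ) (hp : 1 ≤ p) (z : ℂ) (r : ℝ) (hr : r < 1)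
    (hz : ∀ x ∈ Set.uIcc a b, ‖z * ((1 + exp (L x)) ^ p * exp (-L x))‖ ≤ r) :
    HasSum (fun n => 2 * Real.pi * I * (fussCatalan p n * z ^ n))
      (∫ x in a..b, ((1 - ((p : ℂ) - 1) * exp (L x)) * L' x) /
        (1 - z * ((1 + exp (L x)) ^ p * exp (-L x)))) := by
  have hc := h.continuousOn
  have hc' := h.cont
  have hr0 : 0 ≤ r := (norm_nonneg _).trans (hz a Set.left_mem_uIcc)
  set c : ℝ → ℂ := fun x => (1 - ((p : ℂ) - 1) * exp (L x)) * L' x with hcdef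
  set k : ℝ → ℂ := fun x => (1 + exp (L x)) ^ p * exp (-L x) with hkdef
  have hcc : ContinuousOn c (Set.uIcc a b) := by fun_prop
  have hkc : ContinuousOn k (Set.uIcc a b) := by fun_prop
  have key : HasSum (fun n : ℕ => ∫ x in a..b, c x * (z * k x) ^ n)
      (∫ x in a..b, c x / (1 - z * k x)) := by
    apply intervalIntegral.hasSum_integral_of_dominated_convergence
      (fun n x => ‖c x‖ * r ^ n)
    · intro n
      apply ContinuousOn.aestronglyMeasurable _ measurableSet_uIoc
      apply ContinuousOn.mono _ Set.uIoc_subset_uIcc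
      fun_prop
    · intro n
      refine Filter.Eventually.of_forall fun x hx => ?_
      rw [norm_mul, norm_pow]
      have := hz x (Set.uIoc_subset_uIcc hx)
      gcongr
    · refine Filter.Eventually.of_forall fun x hx => ?_
      exact (summable_geometric_of_lt_one hr0 hr).mul_left _
    · simp_rw [tsum_mul_left]
      apply ContinuousOn.intervalIntegrable
      fun_prop
    · refine Filter.Eventually.of_forall fun x hx => ?_
      rw [div_eq_mul_inv]
      apply HasSum.mul_left
      apply hasSum_geometric_of_norm_lt_one
      exact (hz x (Set.uIoc_subset_uIcc hx)).trans_lt hr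
  convert key using 2 with n
  simp_rw [mul_pow, mul_left_comm _ (z ^ n)]
  rw [intervalIntegral.integral_const_mul, h.integral_moment p n hp]
  ring

end IsLogLoop

/-- A Cauchy-type integral `∫ c / (1 - z k)` is holomorphic in `z` where its denominator does not
vanish. -/
lemma differentiableOn_integral_div {a b : ℝ} {c k : ℝ → ℂ} (hc : ContinuousOn c (Set.uIcc a b))
    (hk : ContinuousOn k (Set.uIcc a b)) {S : Set ℂ} (hS : IsOpen S)
    (hne : ∀ z ∈ S, ∀ x ∈ Set.uIcc a b, 1 - z * k x ≠ 0) :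
    DifferentiableOn ℂ (fun z => ∫ x in a..b, c x / (1 - z * k x)) S := by
  intro z₀ hz₀
  obtain ⟨ε, hε, hball⟩ := Metric.nhds_basis_closedBall.mem_iff.1 (hS.mem_nhds hz₀)
  have hcomp : IsCompact (Metric.closedBall z₀ ε ×ˢ Set.uIcc a b) :=
    (isCompact_closedBall z₀ ε).prod isCompact_uIcc
  have hcont : ContinuousOn (fun q : ℂ × ℝ => c q.2 * k q.2 / (1 - q.1 * k q.2) ^ 2)
      (Metric.closedBall z₀ ε ×ˢ Set.uIcc a b) := by
    have h1 : ContinuousOn (fun q : ℂ × ℝ => c q.2) (Metric.closedBall z₀ ε ×ˢ Set.uIcc a b) :=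
      hc.comp continuousOn_snd fun q hq => hq.2
    have h2 : ContinuousOn (fun q : ℂ × ℝ => k q.2) (Metric.closedBall z₀ ε ×ˢ Set.uIcc a b) :=
      hk.comp continuousOn_snd fun q hq => hq.2
    refine (h1.mul h2).div ((continuousOn_const.sub (continuousOn_fst.mul h2)).pow 2) ?_
    intro q hq
    exact pow_ne_zero 2 (hne _ (hball hq.1) _ hq.2)
  obtain ⟨M, hM⟩ := hcomp.exists_bound_of_continuousOn hcont
  have hcz : ∀ z ∈ S, ContinuousOn (fun x => c x / (1 - z * k x)) (Set.uIcc a b) := by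
    intro z hz
    exact hc.div (by fun_prop) (hne z hz)
  refine ((intervalIntegral.hasDerivAt_integral_of_dominated_loc_of_deriv_le (bound := fun _ => M)
    (F' := fun z x => c x * k x / (1 - z * k x) ^ 2)
    (Metric.closedBall_mem_nhds z₀ hε) ?_ ?_ ?_ ?_ ?_ ?_).2).differentiableAt.differentiableWithinAt
  · filter_upwards [hS.mem_nhds hz₀] with z hz
    exact ((hcz z hz).mono Set.uIoc_subset_uIcc).aestronglyMeasurable measurableSet_uIoc
  · exact (hcz z₀ hz₀).intervalIntegrable
  · refine ContinuousOn.aestronglyMeasurable (ContinuousOn.mono ?_ Set.uIoc_subset_uIcc)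
      measurableSet_uIoc
    exact (hc.mul hk).div (by fun_prop) fun x hx => pow_ne_zero 2 (hne z₀ hz₀ x hx)
  · exact Filter.Eventually.of_forall fun x hx z hz => hM (z, x) ⟨hz, Set.uIoc_subset_uIcc hx⟩
  · exact intervalIntegrable_const
  · refine Filter.Eventually.of_forall fun x hx z hz => ?_
    have h0 := hne z (hball hz) x (Set.uIoc_subset_uIcc hx)
    have hd : HasDerivAt (fun z => 1 - z * k x) (-(1 * k x)) z :=
      ((hasDerivAt_id z).mul_const (k x)).const_sub 1
    exact ((hasDerivAt_const z (c x)).div hd h0).congr_deriv (by ring)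

/-! ### The functional equation for small `z` -/

lemma norm_geom_le (p : ℕ) {s t : ℂ} (hs : ‖s‖ ≤ 1) (ht : ‖t‖ ≤ 1) :
    ‖∑ i ∈ Finset.range p, (1 + s) ^ i * (1 + t) ^ (p - 1 - i)‖ ≤ (p + 1) * 2 ^ p := by
  have h2 : ∀ w : ℂ, ‖w‖ ≤ 1 → ‖1 + w‖ ≤ 2 := fun w hw => by
    refine (norm_add_le _ _).trans ?_
    rw [norm_one]; linarith
  calc _ ≤ ∑ i ∈ Finset.range p, (2 : ℝ) ^ p := by
        refine norm_sum_le_of_le _ fun i hi => ?_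
        have hi' := Finset.mem_range.1 hi
        rw [norm_mul, norm_pow, norm_pow]
        calc ‖1 + s‖ ^ i * ‖1 + t‖ ^ (p - 1 - i) ≤ 2 ^ i * 2 ^ (p - 1 - i) := by
              gcongr
              · exact h2 s hs
              · exact h2 t ht
          _ = 2 ^ (p - 1) := by rw [← pow_add]; congr 1; omega
          _ ≤ 2 ^ p := pow_le_pow_right₀ one_le_two (by omega)
    _ ≤ _ := by
        rw [Finset.sum_const, Finset.card_range, nsmul_eq_mul]
        gcongr
        linarith

/-- For small `z` the equation `t = z (1 + t) ^ p` has a solution in the unit disc, by Banach's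
fixed point theorem on the disc of radius `1 / 2`. -/
lemma exists_small_root (p : ℕ) (z : ℂ) (hz : ‖z‖ * ((p + 1) * 2 ^ p) ≤ 1 / 2) :
    ∃ t : ℂ, ‖t‖ < 1 ∧ t = z * (1 + t) ^ p := by
  have hdiff : ∀ s ∈ Metric.closedBall (0 : ℂ) (1 / 2), ∀ t ∈ Metric.closedBall (0 : ℂ) (1 / 2),
      ‖z * (1 + s) ^ p - z * (1 + t) ^ p‖ ≤ 1 / 2 * ‖s - t‖ := by
    intro s hs t ht
    rw [mem_closedBall_zero_iff] at hs ht
    rw [← mul_sub, ← add_sub_add_left_eq_sub s t 1, ← geom_sum₂_mul, norm_mul, norm_mul,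
      ← mul_assoc]
    gcongr
    refine le_trans ?_ hz
    gcongr
    exact norm_geom_le p (by linarith) (by linarith)
  have hmaps : Set.MapsTo (fun t : ℂ => z * (1 + t) ^ p) (Metric.closedBall 0 (1 / 2))
      (Metric.closedBall 0 (1 / 2)) := by
    intro t ht
    simp only [mem_closedBall_zero_iff] at ht ⊢
    have h1 : ‖1 + t‖ ≤ 2 := by
      refine (norm_add_le _ _).trans ?_
      rw [norm_one]; linarith
    rw [norm_mul, norm_pow]
    calc ‖z‖ * ‖1 + t‖ ^ p ≤ ‖z‖ * (1 * 2 ^ p) := by rw [one_mul]; gcongr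
      _ ≤ ‖z‖ * ((p + 1) * 2 ^ p) := by gcongr; linarith [(Nat.cast_nonneg p : (0 : ℝ) ≤ p)]
      _ ≤ 1 / 2 := hz
  have hcontr : ContractingWith (1 / 2) (hmaps.restrict (fun t : ℂ => z * (1 + t) ^ p) _ _) := by
    refine ⟨by rw [← NNReal.coe_lt_coe]; norm_num, LipschitzWith.of_dist_le_mul ?_⟩
    rintro ⟨s, hs⟩ ⟨t, ht⟩
    simpa [Subtype.dist_eq, dist_eq_norm] using hdiff s hs t ht
  obtain ⟨t, ht, hfix, -⟩ := hcontr.exists_fixedPoint' Metric.isClosed_closedBall.isComplete hmaps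
    (x := 0) (by simp) (edist_ne_top _ _)
  refine ⟨t, ?_, hfix.symm⟩
  rw [mem_closedBall_zero_iff] at ht
  linarith

lemma isLogLoop_circle : IsLogLoop 0 (2 * Real.pi) (fun x => x * I) (fun _ => I) where
  hasDerivAt x _ := by simpa using (hasDerivAt_id x).ofReal_comp.mul_const I
  cont := continuousOn_const
  period := by push_cast; ring

/-- Over the unit circle the Cauchy-type integral picks up the residue at the root `t₀` of
`t = z (1 + t) ^ p`, which is `1 + t₀`. -/
lemma integral_circle (p : ℕ) (z t₀ : ℂ) (hz : ‖z‖ * ((p + 1) * 2 ^ p) ≤ 1 / 2)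
    (ht₀ : ‖t₀‖ < 1) (h₀ : t₀ = z * (1 + t₀) ^ p) :
    ∫ x in (0 : ℝ)..(2 * Real.pi), ((1 - ((p : ℂ) - 1) * exp (x * I)) * I) /
        (1 - z * ((1 + exp (x * I)) ^ p * exp (-(x * I))))
      = 2 * Real.pi * I * (1 + t₀) := by
  set Q : ℂ → ℂ := fun t => ∑ i ∈ Finset.range p, (1 + t) ^ i * (1 + t₀) ^ (p - 1 - i) with hQ
  have hQd : Differentiable ℂ Q := by fun_prop
  have hQne : ∀ t : ℂ, ‖t‖ ≤ 1 → 1 - z * Q t ≠ 0 := by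
    intro t ht h
    have h1 : ‖z * Q t‖ ≤ 1 / 2 := by
      rw [norm_mul]
      refine le_trans ?_ hz
      gcongr
      exact norm_geom_le p ht ht₀.le
    rw [← sub_eq_zero.1 h, norm_one] at h1
    norm_num at h1
  have hQeq : ∀ t : ℂ, t - z * (1 + t) ^ p = (t - t₀) * (1 - z * Q t) := by
    intro t
    have := geom_sum₂_mul (1 + t) (1 + t₀) p
    rw [add_sub_add_left_eq_sub] at this
    linear_combination h₀ + z * this
  -- the derivative of `t - z (1 + t) ^ p` at `t₀` turns the residue into `1 + t₀`
  have hres : (1 - ((p : ℂ) - 1) * t₀) / (1 - z * Q t₀) = 1 + t₀ := by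
    rw [div_eq_iff (hQne t₀ ht₀.le)]
    have hQt : (1 + t₀) * (z * Q t₀) = p * t₀ := by
      cases p with
      | zero => simp [hQ]
      | succ q =>
        have : Q t₀ = (q + 1 : ℕ) * (1 + t₀) ^ q := by
          simp only [hQ]
          rw [Finset.sum_congr rfl (g := fun _ => (1 + t₀) ^ q), Finset.sum_const,
            Finset.card_range, nsmul_eq_mul]
          intro i hi
          have := Finset.mem_range.1 hi
          rw [← pow_add]; congr 1; omega
        rw [this]
        linear_combination -((q + 1 : ℕ) : ℂ) * h₀
    linear_combination hQt
  have hcauchy := DifferentiableOn.circleIntegral_sub_inv_smul (c := 0) (R := 1) (w := t₀)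
    (f := fun t => (1 - ((p : ℂ) - 1) * t) / (1 - z * Q t))
    (DifferentiableOn.div (by fun_prop) (by fun_prop)
      fun t ht => hQne t (mem_closedBall_zero_iff.1 ht)) (mem_ball_zero_iff.2 ht₀)
  rw [hres, smul_eq_mul] at hcauchy
  rw [← hcauchy, circleIntegral]
  refine intervalIntegral.integral_congr fun x _ => ?_
  have hcm : circleMap 0 1 x = exp (x * I) := by simp [circleMap]
  simp only [deriv_circleMap, hcm, smul_eq_mul]
  set t := exp (x * I) with ht
  have ht1 : ‖t‖ = 1 := norm_exp_ofReal_mul_I x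
  have ht0 : t ≠ 0 := exp_ne_zero _
  have htt : t - t₀ ≠ 0 := by
    intro h
    rw [← sub_eq_zero.1 h] at ht₀
    linarith
  have hD := hQne t ht1.le
  have hden : 1 - z * ((1 + t) ^ p * exp (-(x * I))) = (t - t₀) * (1 - z * Q t) / t := by
    rw [exp_neg, ← ht, ← hQeq t]
    field_simp
  rw [hden]
  field_simp

/-- For small `z` the sum of the series is `1 + t₀`, with `t₀` the small root of
`t = z (1 + t) ^ p`, so it satisfies the functional equation. -/
lemma tsum_eq_of_small (p : ℕ) (hp : 1 ≤ p) (z : ℂ) (hz : ‖z‖ * ((p + 1) * 2 ^ p) ≤ 1 / 2) :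
    z * (∑' n, fussCatalan p n * z ^ n) ^ p - (∑' n, fussCatalan p n * z ^ n) + 1 = 0 := by
  obtain ⟨t₀, ht₀, h₀⟩ := exists_small_root p z hz
  have hs := isLogLoop_circle.hasSum_integral p hp z (1 / 2) (by norm_num) (by
    intro x _
    refine le_trans ?_ hz
    rw [norm_mul, norm_mul, norm_pow]
    have h1 : ‖exp (-((x : ℂ) * I))‖ = 1 := by
      rw [exp_neg, norm_inv, norm_exp_ofReal_mul_I, inv_one]
    have h2 : ‖1 + exp ((x : ℂ) * I)‖ ≤ 2 := by
      refine (norm_add_le _ _).trans ?_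
      rw [norm_one, norm_exp_ofReal_mul_I]; norm_num
    rw [h1, mul_one]
    gcongr
    calc ‖1 + exp ((x : ℂ) * I)‖ ^ p ≤ 1 * 2 ^ p := by rw [one_mul]; gcongr
      _ ≤ (p + 1) * 2 ^ p := by gcongr; linarith [(Nat.cast_nonneg p : (0 : ℝ) ≤ p)])
  rw [integral_circle p z t₀ hz ht₀ h₀] at hs
  have := hs.tsum_eq
  rw [tsum_mul_left] at this
  rw [mul_left_cancel₀ two_pi_I_ne_zero this]
  linear_combination -h₀

/-! ### The loop on which the kernel is real -/

open Polynomial.Chebyshev in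
/-- `sin ((m + 1) x) / sin x`, with its removable singularities filled in by the Chebyshev
polynomial of the second kind. -/
noncomputable def sinRatio (m : ℕ) (x : ℝ) : ℝ := (U ℝ (m : ℤ)).eval (Real.cos x)

lemma sinRatio_mul_sin (m : ℕ) (x : ℝ) : sinRatio m x * Real.sin x = Real.sin ((m + 1) * x) := by
  exact_mod_cast Polynomial.Chebyshev.U_real_cos x m

lemma sinRatio_abs (m : ℕ) (x : ℝ) : sinRatio m |x| = sinRatio m x := by
  simp [sinRatio]

lemma sinRatio_zero (m : ℕ) : sinRatio m 0 = m + 1 := by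
  simp [sinRatio, Polynomial.Chebyshev.U_eval_one]

lemma contDiff_sinRatio (m : ℕ) : ContDiff ℝ 1 (sinRatio m) := by
  have h := (Polynomial.Chebyshev.U ℝ (m : ℤ)).contDiff_aeval (𝕜 := ℝ) 1
  simp only [Polynomial.coe_aeval_eq_eval] at h
  exact h.comp Real.contDiff_cos

/-- The sine law in the triangle with vertices `0`, `-1` and
`exp (i (m + 2) x) / sinRatio m x`. -/
lemma sinRatio_add_exp (m : ℕ) (x : ℝ) :
    (sinRatio m x : ℂ) + exp ((m + 2) * x * I) = exp (x * I) * sinRatio (m + 1) x := by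
  induction m with
  | zero =>
    have : (2 : ℂ) * Complex.cos x = exp (x * I) + exp (-(x * I)) := by
      rw [Complex.two_cos]; simp
    have h2 : exp ((0 + 2) * x * I) = exp (x * I) * exp (x * I) := by
      rw [← exp_add]; congr 1; ring
    have h3 : exp (x * I) * exp (-(x * I)) = 1 := by rw [← exp_add]; simp
    simp [sinRatio]
    rw [this]
    simp only [zero_add] at h2
    rw [h2]
    linear_combination -h3
  | succ m ih =>
    have hrec : sinRatio (m + 1 + 1) x
        = 2 * Real.cos x * sinRatio (m + 1) x - sinRatio m x := by
      have := Polynomial.Chebyshev.U_add_two ℝ (m : ℤ)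
      simp only [sinRatio]
      push_cast
      rw [add_assoc, one_add_one_eq_two, this]
      simp
    have : (2 : ℂ) * Complex.cos x = exp (x * I) + exp (-(x * I)) := by
      rw [Complex.two_cos]; simp
    have h2 : exp ((((m + 1 : ℕ) : ℂ) + 2) * x * I) = exp (x * I) * exp ((m + 2) * x * I) := by
      rw [← exp_add]; congr 1; push_cast; ring
    have h3 : exp (x * I) * exp (-(x * I)) = 1 := by rw [← exp_add]; simp
    rw [hrec, h2]
    push_cast
    rw [this]
    linear_combination exp (x * I) * ih - (sinRatio (m + 1) x : ℂ) * h3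

/-- Concavity of the sine on `[0, π]` bounds the ratios on `|x| ≤ π / (m + 2)`. -/
lemma sinRatio_bounds (m : ℕ) {x : ℝ} (hx : |x| ≤ Real.pi / (m + 2)) :
    0 < sinRatio m x ∧ sinRatio m x ≤ m + 1 ∧ 0 ≤ sinRatio (m + 1) x ∧
      (m + 1) * sinRatio (m + 1) x ≤ (m + 2) * sinRatio m x := by
  rw [← sinRatio_abs m x, ← sinRatio_abs (m + 1) x]
  have hm : (0 : ℝ) ≤ m := Nat.cast_nonneg m
  have hpi := Real.pi_pos
  rcases (abs_nonneg x).eq_or_lt with h0 | h0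
  · rw [← h0, sinRatio_zero, sinRatio_zero]
    push_cast
    refine ⟨by positivity, le_rfl, by positivity, le_of_eq (by ring)⟩
  generalize |x| = y at *
  have hy : (m + 2) * y ≤ Real.pi := by rwa [le_div_iff₀' (by positivity)] at hx
  have hy1 : (m + 1) * y < Real.pi := by nlinarith
  have hy2 : y < Real.pi := by nlinarith
  have hs : 0 < Real.sin y := Real.sin_pos_of_pos_of_lt_pi h0 hy2
  have e1 := sinRatio_mul_sin m y
  have e2 := sinRatio_mul_sin (m + 1) y
  push_cast at e2
  rw [add_assoc, one_add_one_eq_two] at e2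
  have hs1 : 0 < Real.sin ((m + 1) * y) := Real.sin_pos_of_pos_of_lt_pi (by positivity) hy1
  have hs2 : 0 ≤ Real.sin ((m + 2) * y) := Real.sin_nonneg_of_nonneg_of_le_pi (by positivity) hy
  have hconc : ∀ c w : ℝ, 0 ≤ c → c ≤ 1 → 0 ≤ w → w ≤ Real.pi →
      c * Real.sin w ≤ Real.sin (c * w) := by
    intro c w hc hc1 hw hwpi
    have := strictConcaveOn_sin_Icc.concaveOn.2 (x := 0) (y := w) ⟨le_rfl, hpi.le⟩ ⟨hw, hwpi⟩
      (sub_nonneg.2 hc1) hc (by ring)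
    simpa using this
  have c1 : Real.sin ((m + 1) * y) ≤ (m + 1) * Real.sin y := by
    have := hconc (1 / (m + 1)) ((m + 1) * y) (by positivity)
      (by rw [div_le_one (by positivity)]; linarith) (by positivity) hy1.le
    rw [← mul_assoc, one_div_mul_cancel (by positivity), one_mul, one_div_mul_eq_div,
      div_le_iff₀' (by positivity)] at this
    exact this
  have c2 : (m + 1) * Real.sin ((m + 2) * y) ≤ (m + 2) * Real.sin ((m + 1) * y) := by
    have := hconc ((m + 1) / (m + 2)) ((m + 2) * y) (by positivity)
      (by rw [div_le_one (by positivity)]; linarith) (by positivity) hy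
    rw [← mul_assoc, div_mul_cancel₀ _ (by positivity), div_mul_eq_mul_div,
      div_le_iff₀' (by positivity)] at this
    exact this
  refine ⟨?_, ?_, ?_, ?_⟩
  · exact pos_of_mul_pos_left (e1 ▸ hs1) hs.le
  · exact le_of_mul_le_mul_right (e1 ▸ c1) hs
  · exact nonneg_of_mul_nonneg_left (e2 ▸ hs2) hs
  · refine le_of_mul_le_mul_right ?_ hs
    rw [mul_assoc, mul_assoc, e1, e2]
    exact c2

/-- Logarithm of the loop `exp (i (m + 2) x) / sinRatio m x`. -/
noncomputable def logCurve (m : ℕ) (x : ℝ) : ℂ := (m + 2) * x * I - (Real.log (sinRatio m x) : ℝ)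

lemma uIcc_pi_div (m : ℕ) {x : ℝ}
    (hx : x ∈ Set.uIcc (-(Real.pi / (m + 2))) (Real.pi / (m + 2))) :
    |x| ≤ Real.pi / (m + 2) := by
  have h0 : 0 ≤ Real.pi / ((m : ℝ) + 2) := by positivity
  rw [Set.uIcc_of_le (by linarith)] at hx
  exact abs_le.2 hx

lemma isLogLoop_logCurve (m : ℕ) :
    IsLogLoop (-(Real.pi / (m + 2))) (Real.pi / (m + 2)) (logCurve m)
      (fun x => (m + 2) * I - ((deriv (sinRatio m) x / sinRatio m x : ℝ) : ℂ)) where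
  hasDerivAt x hx := by
    have hpos := (sinRatio_bounds m (uIcc_pi_div m hx)).1
    have h1 : HasDerivAt (sinRatio m) (deriv (sinRatio m) x) x :=
      ((contDiff_sinRatio m).differentiable one_ne_zero x).hasDerivAt
    have h2 := (h1.log hpos.ne').ofReal_comp
    have h3 : HasDerivAt (fun x : ℝ => ((m : ℂ) + 2) * x * I) ((m + 2) * I) x := by
      simpa using ((hasDerivAt_id x).ofReal_comp.const_mul ((m : ℂ) + 2)).mul_const I
    exact h3.sub h2
  cont := by
    refine continuousOn_const.sub (continuous_ofReal.comp_continuousOn ?_)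
    refine ((contDiff_sinRatio m).continuous_deriv le_rfl).continuousOn.div
      (contDiff_sinRatio m).continuous.continuousOn fun x hx => ?_
    exact (sinRatio_bounds m (uIcc_pi_div m hx)).1.ne'
  period := by
    have hm : ((m : ℂ) + 2) ≠ 0 := by exact_mod_cast Nat.succ_ne_zero (m + 1)
    have : sinRatio m (-(Real.pi / (m + 2))) = sinRatio m (Real.pi / (m + 2)) := by
      rw [← sinRatio_abs, abs_neg, sinRatio_abs]
    simp only [logCurve, this]
    push_cast
    field_simp
    ring

/-- Along the loop `(1 + t) ^ p / t` is real and takes values in `[0, 1 / R_p]`. -/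
lemma kernel_logCurve (m : ℕ) {x : ℝ} (hx : |x| ≤ Real.pi / (m + 2)) :
    ∃ k : ℝ, 0 ≤ k ∧ k * Rp (m + 2) ≤ 1 ∧
      (1 + exp (logCurve m x)) ^ (m + 2) * exp (-logCurve m x) = k := by
  obtain ⟨h1, h2, h3, h4⟩ := sinRatio_bounds m hx
  set u := sinRatio m x
  set v := sinRatio (m + 1) x
  have hv : v / u ≤ (m + 2) / (m + 1) := by
    rw [div_le_div_iff₀ h1 (by positivity)]; linarith
  refine ⟨(v / u) ^ (m + 2) * u, by positivity, ?_, ?_⟩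
  · calc (v / u) ^ (m + 2) * u * Rp (m + 2)
        ≤ ((m + 2) / (m + 1)) ^ (m + 2) * (m + 1) * Rp (m + 2) := by
          have : 0 ≤ Rp (m + 2) := by unfold Rp; positivity
          gcongr
      _ = 1 := by
          unfold Rp
          have : (m + 2 - 1 : ℕ) = m + 1 := by omega
          rw [this]
          push_cast
          rw [div_pow]
          field_simp
          ring
  · have hu : (u : ℂ) ≠ 0 := by exact_mod_cast h1.ne'
    have he : exp (logCurve m x) = exp ((m + 2) * x * I) / u := by
      rw [logCurve, exp_sub, ← ofReal_exp, Real.exp_log h1]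
    have hE : exp ((m + 2) * x * I) = exp (x * I) ^ (m + 2) := by
      rw [← exp_nat_mul]; congr 1; push_cast; ring
    have h5 : 1 + exp (logCurve m x) = exp (x * I) * (v / u) := by
      have := sinRatio_add_exp m x
      rw [he]
      field_simp
      exact this
    rw [h5, exp_neg, he, hE]
    push_cast
    have := exp_ne_zero (x * I)
    rw [mul_pow]
    field_simp

/-! ### The cut plane and the conclusion -/

lemma Rp_pos (p : ℕ) (hp : 2 ≤ p) : 0 < Rp p := by
  have : 0 < p - 1 := by omega
  unfold Rp
  positivity

lemma isOpen_cutPlane (p : ℕ) : IsOpen (cutPlane p) :=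
  (isometry_ofReal.isClosedEmbedding.isClosedMap _ isClosed_Ici).isOpen_compl

lemma isPreconnected_cutPlane (p : ℕ) (hp : 2 ≤ p) : IsPreconnected (cutPlane p) := by
  have h0 : (0 : ℂ) ∈ cutPlane p := by
    rintro ⟨x, hx, hx0⟩
    rw [ofReal_eq_zero] at hx0
    have := Rp_pos p hp
    rw [hx0, Set.mem_Ici] at hx
    linarith
  refine (StarConvex.isPathConnected (a := 0) ?_ h0).isConnected.isPreconnected
  rw [starConvex_zero_iff]
  rintro z hz c hc0 hc1 ⟨x, hx, hxz⟩
  have hR := Rp_pos p hp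
  rw [Set.mem_Ici] at hx
  rcases hc0.eq_or_lt with rfl | hc
  · rw [zero_smul, ofReal_eq_zero] at hxz
    linarith
  · refine hz ⟨x / c, ?_, ?_⟩
    · rw [Set.mem_Ici, le_div_iff₀ hc]
      nlinarith
    · rw [ofReal_div, hxz, real_smul]
      have : (c : ℂ) ≠ 0 := by exact_mod_cast hc.ne'
      field_simp

/-- For every integer `p ≥ 2` there is a function `T`, analytic on the cut plane
`Ω_p = ℂ ∖ [R_p, ∞)`, satisfying `z T(z)^p − T(z) + 1 = 0` on `Ω_p` and agreeing with
the Fuss–Catalan generating series `Σ_{n ≥ 0} C_n^{(p)} z^n` for `|z| < R_p`. -/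
theorem exists_fussCatalan_analytic_extension (p : ℕ) (hp : 2 ≤ p) :
    ∃ T : ℂ → ℂ,
      AnalyticOnNhd ℂ T (cutPlane p) ∧
      (∀ z ∈ cutPlane p, z * T z ^ p - T z + 1 = 0) ∧
      (∀ z : ℂ, ‖z‖ < Rp p → T z = ∑' n : ℕ, fussCatalan p n * z ^ n) := by
  obtain ⟨m, rfl⟩ : ∃ m, p = m + 2 := ⟨p - 2, by omega⟩
  have hR := Rp_pos _ hp
  have hloop := isLogLoop_logCurve m
  have hLc := hloop.continuousOn
  have hLc' := hloop.cont
  set a := Real.pi / ((m : ℝ) + 2)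
  set L := logCurve m
  set L' : ℝ → ℂ := fun x => (m + 2) * I - ((deriv (sinRatio m) x / sinRatio m x : ℝ) : ℂ)
  set c : ℝ → ℂ := fun x => (1 - (((m + 2 : ℕ) : ℂ) - 1) * exp (L x)) * L' x with hc
  set k : ℝ → ℂ := fun x => (1 + exp (L x)) ^ (m + 2) * exp (-L x) with hk
  have hk_real : ∀ x ∈ Set.uIcc (-a) a, ∃ r : ℝ, 0 ≤ r ∧ r * Rp (m + 2) ≤ 1 ∧ k x = r :=
    fun x hx => kernel_logCurve m (uIcc_pi_div m hx)
  have hcc : ContinuousOn c (Set.uIcc (-a) a) := by fun_prop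
  have hkc : ContinuousOn k (Set.uIcc (-a) a) := by fun_prop
  have hne : ∀ z ∈ cutPlane (m + 2), ∀ x ∈ Set.uIcc (-a) a, 1 - z * k x ≠ 0 := by
    intro z hz x hx h
    obtain ⟨r, hr0, hr1, hr⟩ := hk_real x hx
    rw [hr] at h
    have hr' : r ≠ 0 := by
      rintro rfl
      simp at h
    have hrc : (r : ℂ) ≠ 0 := by exact_mod_cast hr'
    refine hz ⟨1 / r, ?_, ?_⟩
    · rw [Set.mem_Ici, le_div_iff₀ (lt_of_le_of_ne hr0 hr'.symm)]
      linarith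
    · push_cast
      rw [div_eq_iff hrc]
      linear_combination h
  let T : ℂ → ℂ := fun z => (2 * Real.pi * I)⁻¹ * ∫ x in (-a)..a, c x / (1 - z * k x)
  have hT : AnalyticOnNhd ℂ T (cutPlane (m + 2)) :=
    ((differentiableOn_integral_div hcc hkc (isOpen_cutPlane _) hne).const_mul _).analyticOnNhd
      (isOpen_cutPlane _)
  have hser : ∀ z : ℂ, ‖z‖ < Rp (m + 2) → T z = ∑' n : ℕ, fussCatalan (m + 2) n * z ^ n := by
    intro z hz
    have hs := hloop.hasSum_integral (m + 2) (by omega) z (‖z‖ / Rp (m + 2))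
      ((div_lt_one hR).2 hz) (by
        intro x hx
        obtain ⟨r, hr0, hr1, hr⟩ := hk_real x hx
        change ‖z * k x‖ ≤ _
        rw [hr, norm_mul, norm_real, Real.norm_of_nonneg hr0, le_div_iff₀ hR, mul_assoc]
        exact mul_le_of_le_one_right (norm_nonneg z) hr1)
    have h := hs.tsum_eq
    rw [tsum_mul_left] at h
    change _⁻¹ * _ = _
    rw [inv_mul_eq_iff_eq_mul₀ two_pi_I_ne_zero]
    exact h.symm
  refine ⟨T, hT, ?_, hser⟩
  have h0 : (0 : ℂ) ∈ cutPlane (m + 2) := by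
    rintro ⟨x, hx, hx0⟩
    rw [ofReal_eq_zero] at hx0
    rw [hx0, Set.mem_Ici] at hx
    linarith
  -- the equation holds near `0`, hence on the whole cut plane by the identity theorem
  have hP : AnalyticOnNhd ℂ (fun z => z * T z ^ (m + 2) - T z + 1) (cutPlane (m + 2)) :=
    ((analyticOnNhd_id.mul (hT.pow _)).sub hT).add analyticOnNhd_const
  refine hP.eqOn_zero_of_preconnected_of_eventuallyEq_zero (isPreconnected_cutPlane _ hp) h0 ?_
  have hε : ∀ᶠ z : ℂ in nhds 0, ‖z‖ * (((m + 2 : ℕ) + 1) * 2 ^ (m + 2)) < 1 / 2 := by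
    refine ContinuousAt.eventually_lt (by fun_prop) continuousAt_const ?_
    simp
  have hε' : ∀ᶠ z : ℂ in nhds 0, ‖z‖ < Rp (m + 2) :=
    ContinuousAt.eventually_lt (by fun_prop) continuousAt_const (by simpa using hR)
  filter_upwards [hε, hε'] with z h1 h2
  simp only [hser z h2, Pi.zero_apply]
  exact tsum_eq_of_small (m + 2) (by omega) z h1.le
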